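/- arXiv:2202.02963 — 2 statements merged into one kernel-verified Lean document; each statement's English description precedes it below -/
import Mathlib

section
/- Let 1<p<∞ with conjugate exponent p′, let b > 1/p′, and let a ≥ 0. For T > 2 and a nonnegative measurable function g on (0,T), define G_a(t) = ∫₀^{t/2}(t−s)^{−a} g(s) ds for t ∈ (2,T). Then: (i) sup_{2<t<T} t^{a} G_a(t) ≤ 2^{a} C_{b,p} ‖⟨s⟩^b g‖_{L_p(0,T)}, where C_{b,p} = (∫₀^∞⟨s⟩^{−bp′} ds)^{1/p′}; and (ii) if moreover (a−b)p > 1, then ‖⟨t⟩^b G_a‖_{L_p(2,T)} ≤ C‖⟨s⟩^b g‖_{L_p(0,T)} with C depending only on a, b, p (not on T or g). -/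
open MeasureTheory Set ENNReal

/-! Hölder's inequality against the weight `⟨s⟩ᵇ` bounds `∫ g` over the half line by
`C_{b,p} ‖⟨s⟩ᵇ g‖_p`. For `s < t / 2` the kernel satisfies `(t - s)⁻ᵃ ≤ 2ᵃ t⁻ᵃ`, which turns this
into (i). Since `t ~ ⟨t⟩` away from the origin, (i) bounds `⟨t⟩ᵇ G_a(t)` by a multiple of `⟨t⟩ᵇ⁻ᵃ`,
whose `L_p` norm is a constant of the same kind, `C_{a-b,p'}`, finite when `(a - b) p > 1`. -/

section WeightedLpNorm

variable {α : Type*} {m : MeasurableSpace α} {μ : Measure α} {p q : ℝ} {w f : α → ℝ≥0∞}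

/-- The norm `‖w f‖_{L_p(μ)}` of an extended nonnegative function, for a weight `w`. The weight
multiplies `f` before the `p`-th power is taken, instead of being a density of `μ`. -/
noncomputable def weightedLpNorm (w : α → ℝ≥0∞) (p : ℝ) (μ : Measure α) (f : α → ℝ≥0∞) : ℝ≥0∞ :=
  (∫⁻ x, (w x * f x) ^ p ∂μ) ^ (1 / p)

theorem lintegral_le_mul_weightedLpNorm (hpq : p.HolderConjugate q) (hw : AEMeasurable w μ)
    (hw_zero : ∀ᵐ x ∂μ, w x ≠ 0) (hw_top : ∀ᵐ x ∂μ, w x ≠ ⊤) (hf : AEMeasurable f μ) :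
    ∫⁻ x, f x ∂μ ≤ (∫⁻ x, w x ^ (-q) ∂μ) ^ (1 / q) * weightedLpNorm w p μ f :=
  calc ∫⁻ x, f x ∂μ = ∫⁻ x, (w x)⁻¹ * (w x * f x) ∂μ := by
        refine lintegral_congr_ae ?_
        filter_upwards [hw_zero, hw_top] with x h0 htop
        rw [← mul_assoc, ENNReal.inv_mul_cancel h0 htop, one_mul]
    _ ≤ (∫⁻ x, (w x)⁻¹ ^ q ∂μ) ^ (1 / q) * weightedLpNorm w p μ f :=
        ENNReal.lintegral_mul_le_Lp_mul_Lq μ hpq.symm hw.inv (hw.mul hf)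
    _ = (∫⁻ x, w x ^ (-q) ∂μ) ^ (1 / q) * weightedLpNorm w p μ f := by
        simp only [ENNReal.inv_rpow, ENNReal.rpow_neg]

theorem weightedLpNorm_le_mul_of_ae_le {h : α → ℝ≥0∞} {M : ℝ≥0∞} (hp : 0 < p)
    (hh : AEMeasurable h μ) (hle : ∀ᵐ x ∂μ, w x * f x ≤ h x * M) :
    weightedLpNorm w p μ f ≤ (∫⁻ x, h x ^ p ∂μ) ^ (1 / p) * M :=
  calc weightedLpNorm w p μ f ≤ (∫⁻ x, h x ^ p * M ^ p ∂μ) ^ (1 / p) := by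
        refine ENNReal.rpow_le_rpow (lintegral_mono_ae ?_) (by positivity)
        filter_upwards [hle] with x hx
        rw [← ENNReal.mul_rpow_of_nonneg _ _ hp.le]
        exact ENNReal.rpow_le_rpow hx hp.le
    _ = (∫⁻ x, h x ^ p ∂μ) ^ (1 / p) * M := by
        rw [lintegral_mul_const'' _ (hh.pow_const p),
          ENNReal.mul_rpow_of_nonneg _ _ (by positivity), ← ENNReal.rpow_mul,
          mul_one_div_cancel hp.ne', ENNReal.rpow_one]

end WeightedLpNorm

section BracketWeight

variable {b p q r t : ℝ} {S : Set ℝ}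

/-- The weight `⟨s⟩ᵇ`, where `⟨s⟩ = √(1 + s²)` is the Japanese bracket, as an extended nonnegative
number. -/
noncomputable def bracketWeight (b s : ℝ) : ℝ≥0∞ :=
  ENNReal.ofReal (Real.sqrt (1 + s ^ 2) ^ b)

/-- The constant `C_{b,p}` of the weighted Hölder inequality on the half line, as a function of the
conjugate exponent `q = p'`; it is `⊤` when the defining integral diverges. -/
noncomputable def bracketConst (b q : ℝ) : ℝ≥0∞ :=
  (∫⁻ s in Ioi (0 : ℝ), bracketWeight (-(b * q)) s) ^ (1 / q)

theorem measurable_bracketWeight (b : ℝ) : Measurable (bracketWeight b) := by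
  unfold bracketWeight
  fun_prop

theorem bracketWeight_ne_zero (b s : ℝ) : bracketWeight b s ≠ 0 :=
  (ENNReal.ofReal_pos.2 (by positivity)).ne'

theorem bracketWeight_ne_top (b s : ℝ) : bracketWeight b s ≠ ⊤ :=
  ENNReal.ofReal_ne_top

theorem bracketWeight_add (b c s : ℝ) :
    bracketWeight (b + c) s = bracketWeight b s * bracketWeight c s := by
  rw [bracketWeight, Real.rpow_add (by positivity), ENNReal.ofReal_mul (by positivity)]
  rfl

theorem bracketWeight_rpow (b s r : ℝ) : bracketWeight b s ^ r = bracketWeight (b * r) s := by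
  rw [bracketWeight, bracketWeight, ENNReal.ofReal_rpow_of_pos (by positivity),
    ← Real.rpow_mul (by positivity)]

theorem bracketWeight_le_of_one_le (hb : 0 ≤ b) (ht : 1 ≤ t) :
    bracketWeight b t ≤ ENNReal.ofReal (2 ^ b) * ENNReal.ofReal (t ^ b) := by
  have hbracket : Real.sqrt (1 + t ^ 2) ≤ 2 * t :=
    Real.sqrt_le_iff.2 ⟨by positivity, by nlinarith⟩
  rw [← ENNReal.ofReal_mul (by positivity), ← Real.mul_rpow zero_le_two (by positivity)]
  exact ENNReal.ofReal_le_ofReal (Real.rpow_le_rpow (by positivity) hbracket hb)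

theorem lintegral_bracketWeight_neg_ne_top (hr : 1 < r) : ∫⁻ s, bracketWeight (-r) s ≠ ⊤ := by
  have hint : Integrable (fun s : ℝ ↦ (1 + ‖s‖ ^ 2) ^ (-r / 2)) :=
    integrable_rpow_neg_one_add_norm_sq (by simpa using hr)
  convert hint.lintegral_lt_top.ne using 3 with s
  rw [bracketWeight, Real.sqrt_eq_rpow, ← Real.rpow_mul (by positivity), Real.norm_eq_abs, sq_abs,
    one_div_mul_eq_div]

theorem bracketConst_ne_top (hq : 0 < q) (hb : 1 / q < b) : bracketConst b q ≠ ⊤ := by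
  refine ENNReal.rpow_ne_top_of_nonneg (by positivity) (ne_top_of_le_ne_top ?_
    (setLIntegral_le_lintegral (Ioi 0) _))
  exact lintegral_bracketWeight_neg_ne_top ((div_lt_iff₀ hq).1 hb)

theorem rpow_setLIntegral_le_bracketConst (hq : 0 ≤ q) (hS : S ⊆ Ioi 0) :
    (∫⁻ s in S, bracketWeight (-(b * q)) s) ^ (1 / q) ≤ bracketConst b q :=
  ENNReal.rpow_le_rpow (lintegral_mono_set hS) (by positivity)

theorem setLIntegral_le_bracketConst_mul_weightedLpNorm (hpq : p.HolderConjugate q)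
    (hS : S ⊆ Ioi 0) {g : ℝ → ℝ≥0∞} (hg : AEMeasurable g (volume.restrict S)) :
    ∫⁻ s in S, g s ≤
      bracketConst b q * weightedLpNorm (bracketWeight b) p (volume.restrict S) g := by
  refine (lintegral_le_mul_weightedLpNorm hpq (measurable_bracketWeight b).aemeasurable
    (.of_forall (bracketWeight_ne_zero b)) (.of_forall (bracketWeight_ne_top b)) hg).trans ?_
  simp only [bracketWeight_rpow, mul_neg]
  gcongr
  exact rpow_setLIntegral_le_bracketConst hpq.symm.nonneg hS

theorem weightedLpNorm_le_of_rpow_mul_le {a : ℝ} (hp : 0 < p) (ha : 0 ≤ a)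
    (hS : MeasurableSet S) (hS_one : S ⊆ Ici 1) {G : ℝ → ℝ≥0∞} {M : ℝ≥0∞}
    (hG : ∀ t ∈ S, ENNReal.ofReal (t ^ a) * G t ≤ M) :
    weightedLpNorm (bracketWeight b) p (volume.restrict S) G ≤
      bracketConst (a - b) p * (ENNReal.ofReal (2 ^ a) * M) := by
  have hpointwise : ∀ t ∈ S,
      bracketWeight b t * G t ≤ bracketWeight (b - a) t * (ENNReal.ofReal (2 ^ a) * M) := by
    intro t ht
    calc bracketWeight b t * G t = bracketWeight (b - a) t * (bracketWeight a t * G t) := by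
          rw [← mul_assoc, ← bracketWeight_add, sub_add_cancel]
      _ ≤ bracketWeight (b - a) t *
            (ENNReal.ofReal (2 ^ a) * ENNReal.ofReal (t ^ a) * G t) := by
          gcongr
          exact bracketWeight_le_of_one_le ha (hS_one ht)
      _ ≤ bracketWeight (b - a) t * (ENNReal.ofReal (2 ^ a) * M) := by
          rw [mul_assoc (ENNReal.ofReal _)]
          gcongr
          exact hG t ht
  refine (weightedLpNorm_le_mul_of_ae_le hp (measurable_bracketWeight (b - a)).aemeasurable
    (ae_restrict_of_forall_mem hS hpointwise)).trans ?_
  have hexp : (b - a) * p = -((a - b) * p) := by ring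
  simp only [bracketWeight_rpow, hexp]
  gcongr
  exact rpow_setLIntegral_le_bracketConst hp.le (hS_one.trans (Ici_subset_Ioi.2 one_pos))

end BracketWeight

section KernelFirstPiece

variable {p q a b t T : ℝ} {g : ℝ → ℝ≥0∞}

/-- The function `G_a(t) = ∫₀^{t/2} (t - s)⁻ᵃ g(s) ds`: the part of the convolution of `g` with the
kernel `s⁻ᵃ` that stays away from the singularity of the kernel. -/
noncomputable def kernelFirstPiece (a : ℝ) (g : ℝ → ℝ≥0∞) (t : ℝ) : ℝ≥0∞ :=
  ∫⁻ s in Ioo 0 (t / 2), ENNReal.ofReal (t - s) ^ (-a) * g s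

theorem rpow_mul_kernelFirstPiece_le (ha : 0 ≤ a) (ht : 0 < t) :
    ENNReal.ofReal (t ^ a) * kernelFirstPiece a g t ≤
      ENNReal.ofReal (2 ^ a) * ∫⁻ s in Ioo 0 (t / 2), g s := by
  have hkernel : ∀ s ∈ Ioo 0 (t / 2),
      ENNReal.ofReal (t ^ a) * ENNReal.ofReal (t - s) ^ (-a) ≤ ENNReal.ofReal (2 ^ a) := by
    intro s hs
    have hts : 0 < t - s := by linarith [hs.2]
    have hratio : t / (t - s) ≤ 2 := by
      rw [div_le_iff₀ hts]
      linarith [hs.2]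
    rw [ENNReal.ofReal_rpow_of_pos hts, ← ENNReal.ofReal_mul (by positivity),
      Real.rpow_neg hts.le, ← div_eq_mul_inv, ← Real.div_rpow ht.le hts.le]
    exact ENNReal.ofReal_le_ofReal (Real.rpow_le_rpow (by positivity) hratio ha)
  rw [kernelFirstPiece, ← lintegral_const_mul' _ _ ENNReal.ofReal_ne_top,
    ← lintegral_const_mul' _ _ ENNReal.ofReal_ne_top]
  refine setLIntegral_mono' measurableSet_Ioo fun s hs ↦ ?_
  rw [← mul_assoc]
  gcongr
  exact hkernel s hs

theorem rpow_mul_kernelFirstPiece_le_weightedLpNorm (hpq : p.HolderConjugate q) (ha : 0 ≤ a)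
    (ht : 0 < t) (htT : t / 2 ≤ T) (hg : AEMeasurable g (volume.restrict (Ioo 0 T))) :
    ENNReal.ofReal (t ^ a) * kernelFirstPiece a g t ≤
      ENNReal.ofReal (2 ^ a) * bracketConst b q *
        weightedLpNorm (bracketWeight b) p (volume.restrict (Ioo 0 T)) g :=
  calc ENNReal.ofReal (t ^ a) * kernelFirstPiece a g t
      ≤ ENNReal.ofReal (2 ^ a) * ∫⁻ s in Ioo 0 (t / 2), g s := rpow_mul_kernelFirstPiece_le ha ht
    _ ≤ ENNReal.ofReal (2 ^ a) * ∫⁻ s in Ioo 0 T, g s := by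
        gcongr
    _ ≤ _ := by
        rw [mul_assoc]
        gcongr
        exact setLIntegral_le_bracketConst_mul_weightedLpNorm hpq Ioo_subset_Ioi_self hg

end KernelFirstPiece

/-- bounds for G_a(t) = ∫₀^{t/2} (t-s)^{-a} g(s) ds on (2,T):
(i) sup_{2<t<T} t^a G_a(t) ≤ 2^a C_{b,p} ‖⟨s⟩^b g‖_{L_p(0,T)} with
C_{b,p} = (∫₀^∞ ⟨s⟩^{-bp′} ds)^{1/p′};
(ii) if (a-b)p > 1 then ‖⟨t⟩^b G_a‖_{L_p(2,T)} ≤ C ‖⟨s⟩^b g‖_{L_p(0,T)} with C = C(a,b,p). -/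
theorem kernel_bound_first_piece
    (p p' b a : ℝ) (hp : 1 < p) (hconj : 1 / p + 1 / p' = 1) (hb : 1 / p' < b) (ha : 0 ≤ a) :
    (∀ T : ℝ, 2 < T → ∀ g : ℝ → ℝ≥0∞, Measurable g →
      (⨆ t ∈ Ioo (2 : ℝ) T, ENNReal.ofReal (t ^ a) *
          ∫⁻ s in Ioo 0 (t / 2), ENNReal.ofReal (t - s) ^ (-a) * g s) ≤
        ENNReal.ofReal (2 ^ a) *
          (∫⁻ s in Ioi (0 : ℝ),
              ENNReal.ofReal (Real.sqrt (1 + s ^ 2) ^ (-(b * p')))) ^ (1 / p') *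
          (∫⁻ s in Ioo (0 : ℝ) T,
              (ENNReal.ofReal (Real.sqrt (1 + s ^ 2) ^ b) * g s) ^ p) ^ (1 / p)) ∧
    ((a - b) * p > 1 → ∃ C : ℝ≥0∞, C ≠ ⊤ ∧
      ∀ T : ℝ, 2 < T → ∀ g : ℝ → ℝ≥0∞, Measurable g →
        (∫⁻ t in Ioo (2 : ℝ) T,
            (ENNReal.ofReal (Real.sqrt (1 + t ^ 2) ^ b) *
              ∫⁻ s in Ioo 0 (t / 2), ENNReal.ofReal (t - s) ^ (-a) * g s) ^ p) ^ (1 / p) ≤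
          C * (∫⁻ s in Ioo (0 : ℝ) T,
              (ENNReal.ofReal (Real.sqrt (1 + s ^ 2) ^ b) * g s) ^ p) ^ (1 / p)) := by
  have hpq : p.HolderConjugate p' := Real.holderConjugate_iff.2 ⟨hp, by simpa using hconj⟩
  have hpointwise (T : ℝ) (g : ℝ → ℝ≥0∞) (hg : Measurable g) : ∀ t ∈ Ioo 2 T,
      ENNReal.ofReal (t ^ a) * kernelFirstPiece a g t ≤
        ENNReal.ofReal (2 ^ a) * bracketConst b p' *
          weightedLpNorm (bracketWeight b) p (volume.restrict (Ioo 0 T)) g := fun t ht ↦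
    rpow_mul_kernelFirstPiece_le_weightedLpNorm hpq ha (by linarith [ht.1])
      (by linarith [ht.1, ht.2]) hg.aemeasurable
  refine ⟨fun T _ g hg ↦ iSup₂_le (hpointwise T g hg), fun hab ↦
    ⟨bracketConst (a - b) p * (ENNReal.ofReal (2 ^ a) * (ENNReal.ofReal (2 ^ a) *
      bracketConst b p')), ?_, fun T _ g hg ↦ ?_⟩⟩
  · have htail : bracketConst (a - b) p ≠ ⊤ :=
      bracketConst_ne_top hpq.pos ((div_lt_iff₀ hpq.pos).2 hab)
    have hconst : bracketConst b p' ≠ ⊤ := bracketConst_ne_top hpq.symm.pos hb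
    finiteness
  · have hnorm := weightedLpNorm_le_of_rpow_mul_le (b := b) hpq.pos ha measurableSet_Ioo
      (fun t ht ↦ one_le_two.trans ht.1.le) (hpointwise T g hg)
    rw [← mul_assoc (ENNReal.ofReal _), ← mul_assoc (bracketConst _ _)] at hnorm
    exact hnorm
end

section
/- Let 1<p<∞, b ≥ 0 and a > 1. For T > 2 and a nonnegative measurable function h on (0,T), define H(t) = ∫_{t/2}^{t−1}(t−s)^{−a} h(s) ds for t ∈ (2,T). Then ‖⟨t⟩^b H‖_{L_p(2,T)} ≤ C‖⟨s⟩^b h‖_{L_p(0,T)}, where C depends only on a, b and p (not on T or h). -/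
open MeasureTheory Set ENNReal

/-!
On the range `t / 2 < s < t - 1` the weights `⟨t⟩ ^ b` and `⟨s⟩ ^ b` are comparable, so the weight
passes under the integral sign at the cost of a factor `2 ^ |b|`. What remains is dominated by the
convolution of `⟨s⟩ ^ b h(s)` on `(0, T)` with `u ^ (-a)` on `(1, ∞)`. The latter is integrable as
`a > 1`, and Young's inequality `‖k ⋆ g‖_p ≤ ‖k‖_1 ‖g‖_p` concludes.
-/

section Lintegral

variable {α : Type*} [MeasurableSpace α] {μ : Measure α} {p : ℝ}

theorem lintegral_mul_rpow_le_lintegral_rpow_sub_one_mul (hp : 1 ≤ p) {k g : α → ℝ≥0∞}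
    (hk : AEMeasurable k μ) (hg : AEMeasurable g μ) :
    (∫⁻ x, k x * g x ∂μ) ^ p ≤ (∫⁻ x, k x ∂μ) ^ (p - 1) * ∫⁻ x, k x * g x ^ p ∂μ := by
  have hp₀ : 0 < p := by linarith
  have hinv : 0 ≤ 1 - p⁻¹ := sub_nonneg.2 (inv_le_one_of_one_le₀ hp)
  have hsplit (x : α) : k x ^ (1 - p⁻¹) * (k x * g x ^ p) ^ p⁻¹ = k x * g x := by
    rw [mul_rpow_of_nonneg _ _ (inv_nonneg.2 hp₀.le), rpow_rpow_inv hp₀.ne', ← mul_assoc,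
      ← rpow_add_of_nonneg _ _ hinv (inv_nonneg.2 hp₀.le), sub_add_cancel, rpow_one]
  calc (∫⁻ x, k x * g x ∂μ) ^ p
      = (∫⁻ x, k x ^ (1 - p⁻¹) * (k x * g x ^ p) ^ p⁻¹ ∂μ) ^ p := by simp only [hsplit]
    _ ≤ ((∫⁻ x, k x ∂μ) ^ (1 - p⁻¹) * (∫⁻ x, k x * g x ^ p ∂μ) ^ p⁻¹) ^ p := by
      gcongr
      exact lintegral_mul_norm_pow_le hk (hk.mul (hg.pow_const p)) hinv
        (inv_nonneg.2 hp₀.le) (sub_add_cancel 1 p⁻¹)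
    _ = (∫⁻ x, k x ∂μ) ^ (p - 1) * ∫⁻ x, k x * g x ^ p ∂μ := by
      rw [mul_rpow_of_nonneg _ _ hp₀.le, rpow_inv_rpow hp₀.ne', ← rpow_mul, sub_mul, one_mul,
        inv_mul_cancel₀ hp₀.ne']

theorem lintegral_indicator_rpow (hp : 0 < p) {s : Set α} (hs : MeasurableSet s)
    (f : α → ℝ≥0∞) : ∫⁻ x, s.indicator f x ^ p ∂μ = ∫⁻ x in s, f x ^ p ∂μ := by
  rw [← lintegral_indicator hs]
  exact congrArg (lintegral μ)
    (indicator_comp_of_zero (g := (· ^ p)) (ENNReal.zero_rpow_of_pos hp)).symm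

end Lintegral

section Young

variable {G : Type*} [MeasurableSpace G] {μ : Measure G} {k g : G → ℝ≥0∞}

section AddGroup

variable [AddGroup G] [MeasurableAdd₂ G] [MeasurableNeg G] [μ.IsAddLeftInvariant] [SFinite μ]

theorem lintegral_lconvolution (hk : AEMeasurable k μ) (hg : AEMeasurable g μ) :
    ∫⁻ x, (k ⋆ₗ[μ] g) x ∂μ = (∫⁻ x, k x ∂μ) * ∫⁻ x, g x ∂μ := by
  simp only [lconvolution_def]
  rw [lintegral_lintegral_swap (by fun_prop), ← lintegral_mul_const'' _ hk]
  refine lintegral_congr fun y ↦ ?_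
  have hshift : AEMeasurable (fun x ↦ g (-y + x)) μ :=
    hg.comp_quasiMeasurePreserving (measurePreserving_add_left μ (-y)).quasiMeasurePreserving
  rw [lintegral_const_mul'' _ hshift, lintegral_add_left_eq_self g (-y)]

theorem lconvolution_rpow_le {p : ℝ} (hp : 1 ≤ p) (hk : AEMeasurable k μ)
    (hg : AEMeasurable g μ) (x : G) :
    (k ⋆ₗ[μ] g) x ^ p ≤ (∫⁻ y, k y ∂μ) ^ (p - 1) * (k ⋆ₗ[μ] fun y ↦ g y ^ p) x :=
  lintegral_mul_rpow_le_lintegral_rpow_sub_one_mul hp hk (by fun_prop)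

theorem lintegral_Lp_lconvolution_le {p : ℝ} (hp : 1 ≤ p) (hk : AEMeasurable k μ)
    (hg : AEMeasurable g μ) :
    (∫⁻ x, (k ⋆ₗ[μ] g) x ^ p ∂μ) ^ (1 / p) ≤
      (∫⁻ x, k x ∂μ) * (∫⁻ x, g x ^ p ∂μ) ^ (1 / p) := by
  have hp₀ : 0 < p := by linarith
  rw [one_div, rpow_inv_le_iff hp₀, mul_rpow_of_nonneg _ _ hp₀.le, rpow_inv_rpow hp₀.ne']
  calc ∫⁻ x, (k ⋆ₗ[μ] g) x ^ p ∂μ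
      ≤ ∫⁻ x, (∫⁻ y, k y ∂μ) ^ (p - 1) * (k ⋆ₗ[μ] fun y ↦ g y ^ p) x ∂μ :=
        lintegral_mono (lconvolution_rpow_le hp hk hg)
    _ = (∫⁻ x, k x ∂μ) ^ (p - 1) * ((∫⁻ x, k x ∂μ) * ∫⁻ x, g x ^ p ∂μ) := by
        rw [lintegral_const_mul'' _ (by fun_prop), lintegral_lconvolution hk (by fun_prop)]
    _ = (∫⁻ x, k x ∂μ) ^ p * ∫⁻ x, g x ^ p ∂μ := by
        rw [← mul_assoc]
        congr 1
        nth_rw 2 [← rpow_one (∫⁻ x, k x ∂μ)]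
        rw [← rpow_add_of_nonneg _ _ (sub_nonneg.2 hp) zero_le_one, sub_add_cancel]

end AddGroup

theorem setLIntegral_le_lconvolution [AddCommGroup G] [MeasurableAdd₂ G] [MeasurableNeg G]
    [μ.IsAddLeftInvariant] [μ.IsNegInvariant] {s : Set G} (hs : MeasurableSet s)
    {f : G → ℝ≥0∞} {x : G} (hf : ∀ y ∈ s, f y ≤ k (x - y) * g y) :
    ∫⁻ y in s, f y ∂μ ≤ (k ⋆ₗ[μ] g) x :=
  calc ∫⁻ y in s, f y ∂μ
      ≤ ∫⁻ y in s, k (x - y) * g y ∂μ := setLIntegral_mono' hs hf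
    _ ≤ ∫⁻ y, k (x - y) * g y ∂μ := setLIntegral_le_lintegral _ _
    _ = (k ⋆ₗ[μ] g) x := by
        rw [lconvolution_comm]
        simp only [lconvolution_def, neg_add_eq_sub, mul_comm]

end Young

section JapaneseBracket

variable {s t c : ℝ}

theorem sqrt_one_add_sq_le_mul (hc : 1 ≤ c) (hts : |t| ≤ c * |s|) :
    √(1 + t ^ 2) ≤ c * √(1 + s ^ 2) := by
  rw [Real.sqrt_le_left (by positivity), mul_pow, Real.sq_sqrt (by positivity)]
  have hsq : t ^ 2 ≤ c ^ 2 * s ^ 2 := by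
    simpa only [mul_pow, sq_abs] using pow_le_pow_left₀ (abs_nonneg t) hts 2
  nlinarith

theorem sqrt_one_add_sq_rpow_le_mul (b : ℝ) (hc : 1 ≤ c) (hst : |s| ≤ |t|)
    (hts : |t| ≤ c * |s|) :
    √(1 + t ^ 2) ^ b ≤ c ^ |b| * √(1 + s ^ 2) ^ b := by
  obtain hb | hb := le_total 0 b
  · rw [abs_of_nonneg hb, ← Real.mul_rpow (by positivity) (by positivity)]
    exact Real.rpow_le_rpow (by positivity) (sqrt_one_add_sq_le_mul hc hts) hb
  · calc √(1 + t ^ 2) ^ b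
        ≤ √(1 + s ^ 2) ^ b := by
          have hsqrt : √(1 + s ^ 2) ≤ √(1 + t ^ 2) := by
            simpa only [one_mul] using sqrt_one_add_sq_le_mul le_rfl (by simpa using hst)
          exact Real.rpow_le_rpow_of_nonpos (by positivity) hsqrt hb
      _ ≤ c ^ |b| * √(1 + s ^ 2) ^ b :=
          le_mul_of_one_le_left (by positivity) (Real.one_le_rpow hc (abs_nonneg b))

end JapaneseBracket

/-- The convolution kernel `2 ^ |b| u ^ (-a)` on `u > 1`, extended by zero. It dominates the kernel
`(t - s) ^ (-a)` on `t / 2 < s < t - 1` conjugated by the weight `⟨·⟩ ^ b`; the factor `2 ^ |b|` is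
the price of the conjugation. -/
noncomputable def truncatedKernel (a b : ℝ) : ℝ → ℝ≥0∞ :=
  (Ioi 1).indicator fun u ↦ ENNReal.ofReal (2 ^ |b| * u ^ (-a))

theorem measurable_truncatedKernel (a b : ℝ) : Measurable (truncatedKernel a b) :=
  Measurable.indicator (by fun_prop) measurableSet_Ioi

theorem lintegral_truncatedKernel_ne_top {a : ℝ} (ha : 1 < a) (b : ℝ) :
    ∫⁻ u, truncatedKernel a b u ≠ ⊤ := by
  have hint : IntegrableOn (fun u : ℝ ↦ 2 ^ |b| * u ^ (-a)) (Ioi 1) :=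
    (integrableOn_Ioi_rpow_of_lt (by linarith) one_pos).const_mul _
  simpa only [truncatedKernel, lintegral_indicator measurableSet_Ioi] using
    hint.lintegral_lt_top.ne

theorem weight_mul_kernel_le {t s : ℝ} (a b : ℝ) (hs : s ∈ Ioo (t / 2) (t - 1)) :
    ENNReal.ofReal (√(1 + t ^ 2) ^ b) * ENNReal.ofReal (t - s) ^ (-a) ≤
      truncatedKernel a b (t - s) * ENNReal.ofReal (√(1 + s ^ 2) ^ b) := by
  obtain ⟨hts, hst⟩ := hs
  have hdist : 1 < t - s := by linarith
  have hweight : √(1 + t ^ 2) ^ b ≤ 2 ^ |b| * √(1 + s ^ 2) ^ b := by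
    refine sqrt_one_add_sq_rpow_le_mul b one_le_two ?_ ?_ <;>
      rw [abs_of_pos (by linarith), abs_of_pos (by linarith)] <;> linarith
  rw [truncatedKernel, indicator_of_mem (mem_Ioi.2 hdist),
    ENNReal.ofReal_rpow_of_pos (by linarith), ← ENNReal.ofReal_mul (by positivity),
    ← ENNReal.ofReal_mul (by positivity), mul_right_comm]
  gcongr

theorem weight_mul_setLIntegral_le_lconvolution {t T : ℝ} (a b : ℝ) (htT : t < T)
    (h : ℝ → ℝ≥0∞) :
    ENNReal.ofReal (√(1 + t ^ 2) ^ b) *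
        ∫⁻ s in Ioo (t / 2) (t - 1), ENNReal.ofReal (t - s) ^ (-a) * h s ≤
      (truncatedKernel a b ⋆ₗ
        (Ioo 0 T).indicator fun s ↦ ENNReal.ofReal (√(1 + s ^ 2) ^ b) * h s) t := by
  refine (lintegral_const_mul_le _ _).trans
    (setLIntegral_le_lconvolution measurableSet_Ioo fun s hs ↦ ?_)
  have hsT : s ∈ Ioo 0 T := ⟨by linarith [hs.1, hs.2], by linarith [hs.2]⟩
  rw [indicator_of_mem hsT, ← mul_assoc, ← mul_assoc]
  exact mul_le_mul_left (weight_mul_kernel_le a b hs) (h s)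

theorem kernel_bound_middle_piece_general (p b a : ℝ) (hp : 1 ≤ p) (ha : 1 < a) :
    ∃ C : ℝ≥0∞, C ≠ ⊤ ∧
      ∀ T : ℝ, ∀ h : ℝ → ℝ≥0∞, AEMeasurable h (volume.restrict (Ioo 0 T)) →
        (∫⁻ t in Ioo (2 : ℝ) T,
            (ENNReal.ofReal (√(1 + t ^ 2) ^ b) *
              ∫⁻ s in Ioo (t / 2) (t - 1), ENNReal.ofReal (t - s) ^ (-a) * h s) ^ p) ^ (1 / p) ≤
          C * (∫⁻ s in Ioo (0 : ℝ) T,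
              (ENNReal.ofReal (√(1 + s ^ 2) ^ b) * h s) ^ p) ^ (1 / p) := by
  refine ⟨∫⁻ u, truncatedKernel a b u, lintegral_truncatedKernel_ne_top ha b, fun T h hh ↦ ?_⟩
  have hp₀ : 0 < p := by linarith
  set g := (Ioo 0 T).indicator fun s ↦ ENNReal.ofReal (√(1 + s ^ 2) ^ b) * h s
  have hg : AEMeasurable g := (aemeasurable_indicator_iff measurableSet_Ioo).2 (by fun_prop)
  rw [← lintegral_indicator_rpow hp₀ measurableSet_Ioo fun s ↦ _ * h s]
  refine le_trans ?_
    (lintegral_Lp_lconvolution_le hp (measurable_truncatedKernel a b).aemeasurable hg)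
  gcongr ?_ ^ (1 / p)
  refine (setLIntegral_mono' measurableSet_Ioo fun t ht ↦ ?_).trans (setLIntegral_le_lintegral _ _)
  gcongr
  exact weight_mul_setLIntegral_le_lconvolution a b ht.2 h

/-- for 1<p<∞, b ≥ 0 and a > 1, the operator
H(t) = ∫_{t/2}^{t-1} (t-s)^{-a} h(s) ds satisfies
‖⟨t⟩^b H‖_{L_p(2,T)} ≤ C ‖⟨s⟩^b h‖_{L_p(0,T)} with C depending only on a, b, p. -/
theorem kernel_bound_middle_piece
    (p b a : ℝ) (hp : 1 < p) (hb : 0 ≤ b) (ha : 1 < a) :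
    ∃ C : ℝ≥0∞, C ≠ ⊤ ∧
      ∀ T : ℝ, 2 < T → ∀ h : ℝ → ℝ≥0∞, Measurable h →
        (∫⁻ t in Ioo (2 : ℝ) T,
            (ENNReal.ofReal (Real.sqrt (1 + t ^ 2) ^ b) *
              ∫⁻ s in Ioo (t / 2) (t - 1), ENNReal.ofReal (t - s) ^ (-a) * h s) ^ p) ^ (1 / p) ≤
          C * (∫⁻ s in Ioo (0 : ℝ) T,
              (ENNReal.ofReal (Real.sqrt (1 + s ^ 2) ^ b) * h s) ^ p) ^ (1 / p) := by
  obtain ⟨C, hC, hbound⟩ := kernel_bound_middle_piece_general p b a hp.le ha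
  exact ⟨C, hC, fun T _ h hh ↦ hbound T h hh.aemeasurable⟩
end
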